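/- arXiv:2211.12260 — 2 statements merged into one kernel-verified Lean document; each statement's English description precedes it below -/
import Mathlib

section
/- For every real x > 0, ∫_{−1}^{1} (μ/√(1 − μ²)) · exp(−x(1 − μ²)/2) · erf(√(x/2)·(μ + 1)) dμ = √(π/(2x)) · (1 − exp(−x) · I_0(x)). -/
open MeasureTheory Real intervalIntegral

/-- Modified Bessel function of the first kind of integer order `n`. -/
noncomputable def besselI (n : ℕ) (x : ℝ) : ℝ :=
  ∑' k : ℕ, (x / 2) ^ (n + 2 * k) / (Nat.factorial k * Nat.factorial (n + k))

/-- The error function `erf(z) = (2/√π) ∫₀ᶻ exp(−u²) du`. -/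
noncomputable def erf (z : ℝ) : ℝ :=
  (2 / Real.sqrt Real.pi) * ∫ u in (0:ℝ)..z, Real.exp (-u ^ 2)

lemma cos_even (k : ℕ) : ∫ t in (-π)..π, cos t ^ (2 * k) =
    2 * π * ((2 * k).factorial / (4 ^ k * k.factorial * k.factorial)) := by
  induction k with
  | zero => simp; ring
  | succ k ih =>
    rw [show 2 * (k + 1) = 2 * k + 2 by ring, integral_cos_pow, ih]
    simp only [sin_pi, sin_neg, Nat.factorial_succ]
    push_cast
    have : (k.factorial : ℝ) ≠ 0 := by positivity
    have : (k : ℝ) + 1 ≠ 0 := by positivity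
    field_simp
    ring

lemma cos_odd (k : ℕ) : ∫ t in (-π)..π, cos t ^ (2 * k + 1) = 0 := by
  induction k with
  | zero => simp
  | succ k ih =>
    rw [show 2 * (k + 1) + 1 = (2 * k + 1) + 2 by ring, integral_cos_pow, ih]
    simp

lemma bessel_int (x : ℝ) : ∫ t in (-π)..π, exp (-x * cos t) = 2 * π * besselI 0 x := by
  have key : HasSum (fun n : ℕ => ∫ t in (-π)..π, (-x * cos t) ^ n / n.factorial)
      (∫ t in (-π)..π, exp (-x * cos t)) := by
    have := intervalIntegral.hasSum_integral_of_dominated_convergence (μ := volume)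
      (a := -π) (b := π) (F := fun (n : ℕ) t => (-x * cos t) ^ n / n.factorial)
      (f := fun t => exp (-x * cos t))
      (fun n _ => |x| ^ n / n.factorial) ?_ ?_ ?_ ?_ ?_
    · exact this
    · intro n
      exact (Continuous.aestronglyMeasurable (by fun_prop))
    · intro n
      refine Filter.Eventually.of_forall fun t _ => ?_
      rw [norm_div, norm_pow, norm_mul]
      simp only [norm_neg, norm_eq_abs, Nat.abs_cast]
      gcongr
      exact mul_le_of_le_one_right (abs_nonneg _) (abs_cos_le_one t)
    · exact Filter.Eventually.of_forall fun t _ => Real.summable_pow_div_factorial _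
    · exact intervalIntegrable_const
    · refine Filter.Eventually.of_forall fun t _ => ?_
      rw [Real.exp_eq_exp_ℝ]
      exact NormedSpace.expSeries_div_hasSum_exp _
  rw [← key.tsum_eq, besselI, ← tsum_mul_left]
  rw [← Function.Injective.tsum_eq (g := fun k : ℕ => 2 * k) (by intro a b h; simpa using h)]
  · congr 1; ext k
    simp only [mul_pow, mul_div_assoc, intervalIntegral.integral_const_mul, intervalIntegral.integral_div, cos_even]
    simp only [zero_add, pow_mul, neg_sq, div_pow]
    have : ((2*k).factorial : ℝ) ≠ 0 := by positivity
    norm_num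
    field_simp
  · intro n hn
    rcases Nat.even_or_odd' n with ⟨k, rfl | rfl⟩
    · exact ⟨k, rfl⟩
    · exfalso; apply hn
      simp only [mul_pow, mul_div_assoc, intervalIntegral.integral_const_mul, intervalIntegral.integral_div, cos_odd]
      simp

lemma bessel_int2 (x : ℝ) : ∫ t in (-(π/2))..(π/2), exp (-(2 * x) * cos t ^ 2) =
    π * (exp (-x) * besselI 0 x) := by
  have h : ∀ t, exp (-(2 * x) * cos t ^ 2) = exp (-x) * exp (-x * cos (2 * t)) := by
    intro t; rw [← exp_add, cos_two_mul]; congr 1; ring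
  simp_rw [h]
  rw [intervalIntegral.integral_const_mul, 
    intervalIntegral.integral_comp_mul_left (fun t => exp (-x * cos t)) (two_ne_zero)]
  rw [show 2 * -(π/2) = -π by ring, show 2 * (π/2) = π by ring, bessel_int]
  simp only [smul_eq_mul]; ring

lemma disk_left (b : ℝ) :
    ∫ p : ℝ × ℝ, {p : ℝ × ℝ | p.1 ^ 2 + p.2 ^ 2 < 2 * p.1}.indicator
      (fun p => exp (-b * (p.1 ^ 2 + p.2 ^ 2))) p =
    ∫ v in (0:ℝ)..2, ∫ u in (-√(2 * v - v ^ 2))..√(2 * v - v ^ 2),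
      exp (-b * (v ^ 2 + u ^ 2)) := by
  have hS : MeasurableSet {p : ℝ × ℝ | p.1 ^ 2 + p.2 ^ 2 < 2 * p.1} :=
    (isOpen_lt (by fun_prop) (by fun_prop)).measurableSet
  rw [Measure.volume_eq_prod, integral_prod]
  · have h1 : ∀ v : ℝ, ∫ u : ℝ, {p : ℝ × ℝ | p.1 ^ 2 + p.2 ^ 2 < 2 * p.1}.indicator
        (fun p => exp (-b * (p.1 ^ 2 + p.2 ^ 2))) (v, u) =
        ∫ u in (-√(2 * v - v ^ 2))..√(2 * v - v ^ 2), exp (-b * (v ^ 2 + u ^ 2)) := by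
      intro v
      rw [intervalIntegral.integral_of_le (by linarith [sqrt_nonneg (2 * v - v ^ 2)]),
        integral_Ioc_eq_integral_Ioo, ← MeasureTheory.integral_indicator measurableSet_Ioo]
      congr 1; ext u
      have : ((v, u) ∈ {p : ℝ × ℝ | p.1 ^ 2 + p.2 ^ 2 < 2 * p.1}) ↔
          u ∈ Set.Ioo (-√(2 * v - v ^ 2)) (√(2 * v - v ^ 2)) := by
        rw [Set.mem_Ioo, ← Real.sq_lt]
        simp only [Set.mem_ofPred_eq]
        constructor <;> intro h <;> linarith
      by_cases hu : u ∈ Set.Ioo (-√(2 * v - v ^ 2)) (√(2 * v - v ^ 2))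
      · rw [Set.indicator_of_mem hu, Set.indicator_of_mem (this.2 hu)]
      · rw [Set.indicator_of_notMem hu, Set.indicator_of_notMem (fun h => hu (this.1 h))]
    simp_rw [h1]
    rw [intervalIntegral.integral_of_le (by norm_num : (0:ℝ) ≤ 2)]
    symm
    apply setIntegral_eq_integral_of_forall_compl_eq_zero
    intro v hv
    have : √(2 * v - v ^ 2) = 0 := by
      apply sqrt_eq_zero_of_nonpos
      simp only [Set.mem_Ioc, not_and_or, not_lt, not_le] at hv
      rcases hv with h | h <;> nlinarith
    rw [this]; simp
  · rw [integrable_indicator_iff hS]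
    have hc : IsCompact (Set.Icc (0:ℝ) 2 ×ˢ Set.Icc (-1:ℝ) 1) := isCompact_Icc.prod isCompact_Icc
    refine IntegrableOn.mono_set (ContinuousOn.integrableOn_compact hc (by fun_prop)) ?_
    rintro ⟨v, u⟩ h
    simp only [Set.mem_ofPred_eq] at h
    refine ⟨⟨?_, ?_⟩, ⟨?_, ?_⟩⟩ <;> simp only <;> nlinarith [sq_nonneg (v-1), sq_nonneg u, sq_nonneg v]

lemma radial (b R : ℝ) (hb : 0 < b) :
    ∫ r in (0:ℝ)..R, r * exp (-b * r ^ 2) = (1 - exp (-b * R ^ 2)) / (2 * b) := by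
  have : ∀ r ∈ Set.uIcc 0 R, HasDerivAt (fun r : ℝ => -exp (-b * r ^ 2) / (2 * b))
      (r * exp (-b * r ^ 2)) r := by
    intro r _
    have h := ((((hasDerivAt_id r).pow 2).const_mul (-b)).exp.neg).div_const (2 * b)
    convert! h using 1
    simp; field_simp
  rw [integral_eq_sub_of_hasDerivAt this (Continuous.intervalIntegrable (by fun_prop) _ _)]
  simp; ring

lemma disk_right (b : ℝ) (hb : 0 < b) :
    ∫ p : ℝ × ℝ, {p : ℝ × ℝ | p.1 ^ 2 + p.2 ^ 2 < 2 * p.1}.indicator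
      (fun p => exp (-b * (p.1 ^ 2 + p.2 ^ 2))) p =
    ∫ t in (-(π/2))..(π/2), (1 - exp (-b * (2 * cos t) ^ 2)) / (2 * b) := by
  have hT : MeasurableSet {p : ℝ × ℝ | p.1 < 2 * cos p.2} :=
    (isOpen_lt (by fun_prop) (by fun_prop)).measurableSet
  have hm : MeasurableSet (Set.Ioi (0:ℝ) ×ˢ Set.Ioo (-π) π) := 
    measurableSet_Ioi.prod measurableSet_Ioo
  rw [← integral_comp_polarCoord_symm]
  have e1 : ∫ p in polarCoord.target, p.1 • ({p : ℝ × ℝ | p.1 ^ 2 + p.2 ^ 2 < 2 * p.1}.indicator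
      (fun p => exp (-b * (p.1 ^ 2 + p.2 ^ 2))) (polarCoord.symm p)) =
      ∫ p in Set.Ioi (0:ℝ) ×ˢ Set.Ioo (-π) π, {p : ℝ × ℝ | p.1 < 2 * cos p.2}.indicator
        (fun p => p.1 * exp (-b * p.1 ^ 2)) p := by
    apply setIntegral_congr_fun hm
    rintro ⟨r, t⟩ ⟨hr, ht⟩
    simp only [Set.mem_Ioi] at hr
    have e : (r * cos t) ^ 2 + (r * sin t) ^ 2 = r ^ 2 := by
      have := sin_sq_add_cos_sq t
      linear_combination r ^ 2 * this
    have e' : r ^ 2 < 2 * (r * cos t) ↔ r < 2 * cos t := by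
      rw [show 2 * (r * cos t) = r * (2 * cos t) by ring, sq]
      exact mul_lt_mul_iff_right₀ hr
    simp only [polarCoord_symm_apply, Set.indicator_apply, Set.mem_ofPred_eq, e, e', smul_eq_mul,
      mul_ite, mul_zero]
  have hint : IntegrableOn ({p : ℝ × ℝ | p.1 < 2 * cos p.2}.indicator
        (fun p => p.1 * exp (-b * p.1 ^ 2))) (Set.Ioi (0:ℝ) ×ˢ Set.Ioo (-π) π)
        ((volume : Measure ℝ).prod volume) := by
    rw [IntegrableOn, integrable_indicator_iff hT, IntegrableOn, Measure.restrict_restrict hT]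
    have hc : IsCompact (Set.Icc (0:ℝ) 2 ×ˢ Set.Icc (-π) π) := isCompact_Icc.prod isCompact_Icc
    refine IntegrableOn.mono_set (ContinuousOn.integrableOn_compact hc (by fun_prop)) ?_
    rintro ⟨r, t⟩ ⟨h, hr, ht⟩
    simp only [Set.mem_ofPred_eq, Set.mem_Ioi] at h hr
    exact ⟨⟨hr.le, by linarith [cos_le_one t]⟩, ⟨ht.1.le, ht.2.le⟩⟩
  rw [e1, Measure.volume_eq_prod, setIntegral_prod _ hint, integral_integral_swap]
  · rw [intervalIntegral.integral_of_le (by linarith [pi_pos]),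
        integral_Ioc_eq_integral_Ioo, ← MeasureTheory.integral_indicator measurableSet_Ioo,
        ← MeasureTheory.integral_indicator measurableSet_Ioo]
    congr 1; ext t
    have key : ∫ r in Set.Ioi (0:ℝ), {p : ℝ × ℝ | p.1 < 2 * cos p.2}.indicator
        (fun p => p.1 * exp (-b * p.1 ^ 2)) (r, t) =
        ∫ r in Set.Ioo 0 (2 * cos t), r * exp (-b * r ^ 2) := by
      rw [← MeasureTheory.integral_indicator measurableSet_Ioo, ← MeasureTheory.integral_indicator measurableSet_Ioi]
      congr 1; ext r
      simp only [Set.indicator_apply, Set.mem_ofPred_eq, Set.mem_Ioi, Set.mem_Ioo]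
      by_cases h1 : 0 < r <;> by_cases h2 : r < 2 * cos t <;> simp [h1, h2]
    simp only [Set.indicator_apply, key] at key ⊢
    by_cases h1 : t ∈ Set.Ioo (-(π/2)) (π/2)
    · have h2 : t ∈ Set.Ioo (-π) π := ⟨by linarith [h1.1, pi_pos], by linarith [h1.2, pi_pos]⟩
      rw [if_pos h1, if_pos h2]
      refine key.trans ?_
      rw [← integral_Ioc_eq_integral_Ioo, 
        ← intervalIntegral.integral_of_le (by linarith [cos_pos_of_mem_Ioo h1]), radial b _ hb]
    · rw [if_neg h1]
      split_ifs with h2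
      · refine key.trans ?_
        have : cos t ≤ 0 := by
          rw [← cos_abs]
          apply cos_nonpos_of_pi_div_two_le_of_le
          · by_contra h; push Not at h; exact h1 (abs_lt.1 h)
          · have := abs_lt.2 h2; linarith [pi_pos]
        rw [Set.Ioo_eq_empty (by linarith)]; simp
      · rfl
  · rw [Measure.prod_restrict]; exact hint

lemma disk (x : ℝ) (hx : 0 < x) : (∫ v in (0:ℝ)..2, ∫ u in (-√(2 * v - v ^ 2))..√(2 * v - v ^ 2),
      exp (-(x/2) * (v ^ 2 + u ^ 2))) =
    (π - ∫ t in (-(π/2))..(π/2), exp (-(2 * x) * cos t ^ 2)) / x := by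
  rw [← disk_left, disk_right _ (by positivity), intervalIntegral.integral_div,
    intervalIntegral.integral_sub (by simp) (Continuous.intervalIntegrable (by fun_prop) _ _)]
  simp only [intervalIntegral.integral_const, smul_eq_mul]
  have : ∀ t, -(x/2) * (2 * cos t)^2 = -(2 * x) * cos t ^ 2 := fun t => by ring
  simp only [this]
  congr 1 <;> ring

lemma erf_deriv (z : ℝ) : HasDerivAt erf (2 / √π * exp (-z ^ 2)) z := by
  have hc : Continuous fun u : ℝ => exp (-u ^ 2) := by fun_prop
  exact (hc.integral_hasStrictDerivAt 0 z).hasDerivAt.const_mul _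

lemma erf_cont : Continuous erf :=
  continuous_iff_continuousAt.2 fun z => (erf_deriv z).continuousAt

lemma erf_zero : erf 0 = 0 := by simp [erf]

lemma erf_scaled (a s : ℝ) (ha : 0 < a) :
    erf (a * s) = a / √π * ∫ u in (-s)..s, exp (-a ^ 2 * u ^ 2) := by
  have h := intervalIntegral.integral_comp_mul_left (a := 0) (b := s) 
    (fun u => exp (-u ^ 2)) ha.ne'
  have hi : ∀ c d, IntervalIntegrable (fun u : ℝ => exp (-a ^ 2 * u ^ 2)) volume c d :=
    fun c d => Continuous.intervalIntegrable (by fun_prop) _ _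
  have h2 : ∫ u in (-s)..0, exp (-a ^ 2 * u ^ 2) = ∫ u in (0:ℝ)..s, exp (-a ^ 2 * u ^ 2) := by
    have := intervalIntegral.integral_comp_neg (a := 0) (b := s) (fun u => exp (-a ^ 2 * u ^ 2))
    simpa using this.symm
  rw [← integral_add_adjacent_intervals (hi (-s) 0) (hi 0 s), h2]
  have h3 : ∀ u, -a ^ 2 * u ^ 2 = -(a * u) ^ 2 := fun u => by ring
  simp only [h3, h, erf, mul_zero, smul_eq_mul]
  field_simp
  ring

lemma parts (a : ℝ) (ha : 0 < a) :
    (∫ μ in (-1 : ℝ)..1, (μ / √(1 - μ ^ 2)) * exp (-a ^ 2 * (1 - μ ^ 2)) * erf (a * (μ + 1))) =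
    ∫ μ in (-1 : ℝ)..1, erf (a * √(1 - μ ^ 2)) * exp (-a ^ 2 * (μ + 1) ^ 2) := by
  have hec := erf_cont
  have hpi : √π ≠ 0 := by positivity
  have hinv : IntervalIntegrable (fun μ : ℝ => 1 / √(1 - μ ^ 2)) volume (-1) 1 := by
    apply intervalIntegrable_deriv_of_nonneg (g := arcsin) continuous_arcsin.continuousOn
    · intro μ hμ
      norm_num at hμ
      exact hasDerivAt_arcsin (by linarith) (by linarith)
    · intro μ _; positivity
  have := intervalIntegral.integral_mul_deriv_eq_deriv_mul_of_hasDerivAt (a := -1) (b := 1)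
    (u := fun μ => erf (a * (μ + 1))) (v := fun μ => -(√π / (2 * a)) * erf (a * √(1 - μ ^ 2)))
    (u' := fun μ => 2 / √π * exp (-(a * (μ + 1)) ^ 2) * a)
    (v' := fun μ => (1 / √(1 - μ ^ 2)) * (μ * exp (-a ^ 2 * (1 - μ ^ 2))))
    (by fun_prop) (by fun_prop) ?_ ?_ (Continuous.intervalIntegrable (by fun_prop) _ _)
    (hinv.mul_continuousOn (by fun_prop))
  · calc _ = ∫ μ in (-1 : ℝ)..1, erf (a * (μ + 1)) *
          ((1 / √(1 - μ ^ 2)) * (μ * exp (-a ^ 2 * (1 - μ ^ 2)))) := by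
          congr 1; ext μ; ring
      _ = _ := by
        rw [this]
        norm_num [erf_zero]
        congr 1; ext μ
        rw [show -(a ^ 2 * (μ + 1) ^ 2) = -(a * (μ + 1)) ^ 2 by ring]
        field_simp
  · intro μ _
    have := (erf_deriv (a * (μ + 1))).comp μ (((hasDerivAt_id μ).add_const 1).const_mul a)
    simpa [Function.comp_def] using this
  · intro μ hμ
    norm_num at hμ
    have hp : 0 < 1 - μ ^ 2 := by nlinarith
    have h1 := (((hasDerivAt_pow 2 μ).const_sub 1).sqrt hp.ne').const_mul a
    have := ((erf_deriv (a * √(1 - μ ^ 2))).comp μ h1).const_mul (-(√π / (2 * a)))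
    convert! this using 1
    rw [mul_pow, sq_sqrt hp.le]
    have : √(1 - μ ^ 2) ≠ 0 := by positivity
    simp only [neg_mul]
    field_simp
    norm_num
    ring

/-- `∫_{−1}^{1} (μ/√(1−μ²)) e^(−x(1−μ²)/2) erf(√(x/2)(μ+1)) dμ
  = √(π/(2x)) (1 − e^(−x) I₀(x))` for `x > 0`. -/
theorem integral_erf_eq_one_sub_exp_besselI (x : ℝ) (hx : 0 < x) :
    (∫ μ in (-1 : ℝ)..1,
        (μ / Real.sqrt (1 - μ ^ 2)) * Real.exp (-x * (1 - μ ^ 2) / 2) *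
          erf (Real.sqrt (x / 2) * (μ + 1))) =
      Real.sqrt (Real.pi / (2 * x)) * (1 - Real.exp (-x) * besselI 0 x) := by
  have ha : 0 < √(x / 2) := by positivity
  have ha2 : √(x / 2) ^ 2 = x / 2 := sq_sqrt (by positivity)
  have h := parts _ ha
  rw [ha2] at h
  have e1 : ∀ μ : ℝ, -x * (1 - μ ^ 2) / 2 = -(x / 2) * (1 - μ ^ 2) := fun μ => by ring
  simp only [e1]
  rw [h]
  have e2 : ∀ μ : ℝ, erf (√(x / 2) * √(1 - μ ^ 2)) * exp (-(x / 2) * (μ + 1) ^ 2) =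
      √(x / 2) / √π * (fun v => ∫ u in (-√(2 * v - v ^ 2))..√(2 * v - v ^ 2),
      exp (-(x/2) * (v ^ 2 + u ^ 2))) (μ + 1) := by
    intro μ
    rw [erf_scaled _ _ ha, ha2]
    simp only
    rw [show 2 * (μ + 1) - (μ + 1) ^ 2 = 1 - μ ^ 2 by ring, mul_assoc,
      ← intervalIntegral.integral_mul_const]
    congr 2; ext u
    rw [← exp_add]; congr 1; ring
  simp only [e2]
  rw [intervalIntegral.integral_const_mul, intervalIntegral.integral_comp_add_right (fun v : ℝ =>
    ∫ u in (-√(2 * v - v ^ 2))..√(2 * v - v ^ 2), exp (-(x/2) * (v ^ 2 + u ^ 2))),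
    show (-1 : ℝ) + 1 = 0 by norm_num, show (1 : ℝ) + 1 = 2 by norm_num]
  rw [disk x hx, bessel_int2]
  have e3 : √(π / (2 * x)) = √(x / 2) / √π * (π / x) := by
    rw [← sqrt_div' _ pi_pos.le]
    rw [sqrt_eq_iff_mul_self_eq (by positivity) (by positivity)]
    rw [mul_mul_mul_comm, mul_self_sqrt (by positivity)]
    field_simp
  rw [e3]; ring
end

section
/- For every real x > 0, ∫_{−1}^{1} (μ/√(1 − μ²)) · exp(x(1 − μ²)/2) · erfi(√(x/2)·(μ + 1)) dμ = √(π/(2x)) · (exp(x) · I_0(x) − 1). -/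
open MeasureTheory Real intervalIntegral

/-- The imaginary error function `erfi(z) = (2/√π) ∫₀ᶻ exp(u²) du`. -/
noncomputable def erfi (z : ℝ) : ℝ :=
  (2 / Real.sqrt Real.pi) * ∫ u in (0:ℝ)..z, Real.exp (u ^ 2)

/-- The unnormalised imaginary error function. -/
noncomputable def EE (z : ℝ) : ℝ := ∫ u in (0:ℝ)..z, Real.exp (u ^ 2)

lemma EE_hasDerivAt (z : ℝ) : HasDerivAt EE (Real.exp (z ^ 2)) z := by
  have hc : Continuous fun u : ℝ => Real.exp (u ^ 2) := by fun_prop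
  exact intervalIntegral.integral_hasDerivAt_right (hc.intervalIntegrable _ _)
    hc.aestronglyMeasurable.stronglyMeasurableAtFilter hc.continuousAt

lemma EE_continuous : Continuous EE :=
  continuous_iff_continuousAt.2 fun z => (EE_hasDerivAt z).continuousAt

/-- The integrand whose integral is constant in `r`. -/
noncomputable def hh (r t : ℝ) : ℝ :=
  r * cos t * Real.exp (r ^ 2 * sin t ^ 2) * EE (r * (1 + cos t))
    - 1 / 4 * Real.exp (2 * r ^ 2 * (1 + cos t))

/-- Its derivative in `r`. -/
noncomputable def hh' (r t : ℝ) : ℝ :=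
  cos t * (1 + 2 * r ^ 2 * sin t ^ 2) * Real.exp (r ^ 2 * sin t ^ 2) * EE (r * (1 + cos t))
    - r * sin t ^ 2 * Real.exp (2 * r ^ 2 * (1 + cos t))

lemma exp_combine (r t : ℝ) : Real.exp (2 * r ^ 2 * (1 + cos t)) =
    Real.exp (r ^ 2 * sin t ^ 2) * Real.exp ((r * (1 + cos t)) ^ 2) := by
  rw [← Real.exp_add]
  congr 1
  rw [Real.sin_sq]; ring

lemma hh_hasDerivAt (r t : ℝ) : HasDerivAt (fun r => hh r t) (hh' r t) r := by
  have h1 : HasDerivAt (fun r : ℝ => r * (1 + cos t)) (1 + cos t) r := by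
    simpa using (hasDerivAt_id r).mul_const (1 + cos t)
  have h2 := (EE_hasDerivAt (r * (1 + cos t))).comp r h1
  have h3 : HasDerivAt (fun r : ℝ => r ^ 2) (2 * r) r := by simpa using hasDerivAt_pow 2 r
  have h4 := (h3.mul_const (sin t ^ 2)).exp
  have h5 := (((h3.const_mul 2).mul_const (1 + cos t)).exp).const_mul (1 / 4 : ℝ)
  have h6 := (((hasDerivAt_id r).mul_const (cos t)).mul h4).mul h2
  refine (h6.sub h5).congr_deriv ?_
  simp only [hh', exp_combine, Function.comp, id, Pi.mul_apply]
  rw [Real.sin_sq]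
  ring

lemma gg_hasDerivAt (r t : ℝ) :
    HasDerivAt (fun t => sin t * Real.exp (r ^ 2 * sin t ^ 2) * EE (r * (1 + cos t)))
      (hh' r t) t := by
  have h1 : HasDerivAt (fun t : ℝ => r * (1 + cos t)) (r * (-sin t)) t :=
    ((Real.hasDerivAt_cos t).const_add 1).const_mul r
  have h2 := (EE_hasDerivAt (r * (1 + cos t))).comp t h1
  have h4 := (((Real.hasDerivAt_sin t).pow 2).const_mul (r ^ 2)).exp
  have h6 := ((Real.hasDerivAt_sin t).mul h4).mul h2
  refine h6.congr_deriv ?_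
  simp only [hh', exp_combine, Function.comp, Pi.mul_apply, Pi.pow_apply]
  push_cast
  ring

lemma hh'_continuous : Continuous fun p : ℝ × ℝ => hh' p.1 p.2 := by
  have := EE_continuous
  unfold hh'
  fun_prop

lemma hh'_continuous_right (r : ℝ) : Continuous (hh' r) := by
  have := EE_continuous
  unfold hh'
  fun_prop

lemma hh_continuous (r : ℝ) : Continuous (hh r) := by
  have := EE_continuous
  unfold hh
  fun_prop

lemma hh_bound (r : ℝ) : ∃ C : ℝ, ∀ t ∈ Set.uIoc (0:ℝ) π, ∀ s ∈ Metric.closedBall r 1,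
    ‖hh' s t‖ ≤ C := by
  have hK : IsCompact (Metric.closedBall r 1 ×ˢ Set.Icc (0:ℝ) π) :=
    (isCompact_closedBall r 1).prod isCompact_Icc
  obtain ⟨C, hC⟩ := hK.exists_bound_of_continuousOn hh'_continuous.continuousOn
  refine ⟨C, fun t ht s hs => ?_⟩
  rw [Set.uIoc_of_le pi_pos.le] at ht
  exact hC (s, t) (Set.mk_mem_prod hs ⟨ht.1.le, ht.2⟩)

lemma hh_int_zero (r : ℝ) (hc : Continuous (hh' r)) : ∫ t in (0:ℝ)..π, hh' r t = 0 := by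
  rw [intervalIntegral.integral_eq_sub_of_hasDerivAt (fun t _ => gg_hasDerivAt r t)
    (hc.intervalIntegrable _ _)]
  simp

lemma hh_int_hasDerivAt (r : ℝ) :
    HasDerivAt (fun r => ∫ t in (0:ℝ)..π, hh r t) 0 r := by
  obtain ⟨C, hb⟩ := hh_bound r
  have hc := hh'_continuous_right r
  have hi : IntervalIntegrable (fun _ : ℝ => C) volume 0 π := by simp
  have hm : ∀ s : ℝ, AEStronglyMeasurable (hh s) (volume.restrict (Set.uIoc 0 π)) :=
    fun s => (hh_continuous s).aestronglyMeasurable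
  have hm' : AEStronglyMeasurable (hh' r) (volume.restrict (Set.uIoc 0 π)) :=
    hc.aestronglyMeasurable
  have hi0 : IntervalIntegrable (hh r) volume 0 π := (hh_continuous r).intervalIntegrable _ _
  have hd : ∀ t ∈ Set.uIoc (0:ℝ) π, ∀ s ∈ Metric.closedBall r 1,
      HasDerivAt (fun s => hh s t) (hh' s t) s := fun t _ s _ => hh_hasDerivAt s t
  have hs : Metric.closedBall r 1 ∈ nhds r := Metric.closedBall_mem_nhds r one_pos
  have h := (intervalIntegral.hasDerivAt_integral_of_dominated_loc_of_deriv_le (𝕜 := ℝ)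
    (μ := volume) (F := hh) (F' := hh') (x₀ := r) (a := 0) (b := π) (bound := fun _ => C)
    hs (Filter.Eventually.of_forall hm) hi0 hm' (Filter.Eventually.of_forall hb) hi
    (Filter.Eventually.of_forall hd)).2
  rw [hh_int_zero r hc] at h
  exact h

lemma hh_int (r : ℝ) : ∫ t in (0:ℝ)..π, hh r t = - (π / 4) := by
  have := is_const_of_deriv_eq_zero (f := fun r => ∫ t in (0:ℝ)..π, hh r t)
    (fun r => (hh_int_hasDerivAt r).differentiableAt) (fun r => (hh_int_hasDerivAt r).deriv) r 0
  refine Eq.trans this ?_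
  simp [hh]
  ring

lemma int_cos_even (k : ℕ) : ∫ t in (0:ℝ)..π, cos t ^ (2 * k) =
    π * (2 * k).factorial / (4 ^ k * (k.factorial : ℝ) ^ 2) := by
  induction k with
  | zero => simp
  | succ k ih =>
    rw [show 2 * (k + 1) = 2 * k + 2 by ring, integral_cos_pow, ih]
    simp only [Nat.factorial_succ, sin_pi, sin_zero]
    push_cast
    field_simp
    ring

lemma int_cos_odd (k : ℕ) : ∫ t in (0:ℝ)..π, cos t ^ (2 * k + 1) = 0 := by
  induction k with
  | zero => simp
  | succ k ih =>
    rw [show 2 * (k + 1) + 1 = 2 * k + 1 + 2 by ring, integral_cos_pow, ih]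
    simp

lemma int_exp_cos (x : ℝ) : ∫ t in (0:ℝ)..π, Real.exp (x * cos t) = π * besselI 0 x := by
  have h : HasSum (fun n : ℕ => ∫ t in (0:ℝ)..π, (x * cos t) ^ n / n.factorial)
      (∫ t in (0:ℝ)..π, Real.exp (x * cos t)) := by
    refine intervalIntegral.hasSum_integral_of_dominated_convergence
      (fun n _ => |x| ^ n / n.factorial) (fun n => ?_) (fun n => ?_) ?_ ?_ ?_
    · exact (by fun_prop : Continuous fun t : ℝ => (x * cos t) ^ n / n.factorial).aestronglyMeasurable
    · refine Filter.Eventually.of_forall fun t _ => ?_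
      rw [norm_div, norm_pow, norm_mul, Real.norm_eq_abs, Real.norm_eq_abs, Real.norm_natCast]
      gcongr
      exact mul_le_of_le_one_right (abs_nonneg _) (abs_cos_le_one t)
    · exact Filter.Eventually.of_forall fun t _ => Real.summable_pow_div_factorial |x|
    · simp
    · refine Filter.Eventually.of_forall fun t _ => ?_
      rw [Real.exp_eq_exp_ℝ]
      exact NormedSpace.expSeries_div_hasSum_exp (x * cos t)
  have hterm : ∀ n : ℕ, ∫ t in (0:ℝ)..π, (x * cos t) ^ n / n.factorial =
      x ^ n / n.factorial * ∫ t in (0:ℝ)..π, cos t ^ n := by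
    intro n
    rw [← intervalIntegral.integral_const_mul]
    congr 1; ext t; rw [mul_pow]; ring
  simp only [hterm] at h
  have hinj : Function.Injective (fun k : ℕ => 2 * k) := fun a b h => by simpa using h
  rw [← hinj.hasSum_iff] at h
  · rw [besselI, ← tsum_mul_left, ← h.tsum_eq]
    congr 1; ext k
    simp only [Function.comp, int_cos_even, zero_add]
    rw [div_pow, pow_mul 2 2 k]
    have : ((2 * k).factorial : ℝ) ≠ 0 := by positivity
    norm_num
    field_simp
  · intro n hn
    rcases Nat.even_or_odd' n with ⟨k, rfl | rfl⟩
    · exact absurd ⟨k, rfl⟩ hn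
    · rw [int_cos_odd, mul_zero]

/-- `∫_{−1}^{1} (μ/√(1−μ²)) e^(x(1−μ²)/2) erfi(√(x/2)(μ+1)) dμ
  = √(π/(2x)) (eˣ I₀(x) − 1)` for `x > 0`. -/
theorem integral_erfi_eq_exp_besselI_sub_one (x : ℝ) (hx : 0 < x) :
    (∫ μ in (-1 : ℝ)..1,
        (μ / Real.sqrt (1 - μ ^ 2)) * Real.exp (x * (1 - μ ^ 2) / 2) *
          erfi (Real.sqrt (x / 2) * (μ + 1))) =
      Real.sqrt (Real.pi / (2 * x)) * (Real.exp x * besselI 0 x - 1) := by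
  obtain ⟨r, hr, hrx⟩ : ∃ r : ℝ, 0 < r ∧ r = Real.sqrt (x / 2) := ⟨_, by positivity, rfl⟩
  have hxr : x = 2 * r ^ 2 := by rw [hrx, Real.sq_sqrt (by positivity)]; ring
  rw [← hrx]
  have h1 := (Polynomial.Chebyshev.integral_measureT
    (fun μ => μ * Real.exp (x * (1 - μ ^ 2) / 2) * erfi (r * (μ + 1)))).symm.trans
    Polynomial.Chebyshev.integral_measureT_eq_integral_cos
  have h2 : (∫ μ in (-1 : ℝ)..1, (μ / Real.sqrt (1 - μ ^ 2)) * Real.exp (x * (1 - μ ^ 2) / 2) *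
      erfi (r * (μ + 1))) = ∫ t in (0:ℝ)..π, cos t * Real.exp (x * (1 - cos t ^ 2) / 2) *
        erfi (r * (cos t + 1)) := by
    rw [← h1]
    congr 1; ext μ
    rw [Real.sqrt_inv]; ring
  have h3 : ∀ t : ℝ, cos t * Real.exp (x * (1 - cos t ^ 2) / 2) * erfi (r * (cos t + 1)) =
      2 / (√π * r) * (hh r t + 1 / 4 * (Real.exp x * Real.exp (x * cos t))) := by
    intro t
    rw [← Real.exp_add, erfi, ← EE, hh, ← Real.sin_sq, hxr, add_comm (cos t) 1]
    rw [show 2 * r ^ 2 * sin t ^ 2 / 2 = r ^ 2 * sin t ^ 2 by ring,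
      show 2 * r ^ 2 + 2 * r ^ 2 * cos t = 2 * r ^ 2 * (1 + cos t) by ring]
    field_simp
    ring
  rw [h2]
  simp only [h3]
  rw [intervalIntegral.integral_const_mul, intervalIntegral.integral_add
    ((hh_continuous r).intervalIntegrable _ _)
    ((by fun_prop : Continuous fun t : ℝ => 1 / 4 * (Real.exp x * Real.exp (x * cos t))).intervalIntegrable _ _),
    intervalIntegral.integral_const_mul, intervalIntegral.integral_const_mul, hh_int, int_exp_cos]
  have h4 : √(π / (2 * x)) = √π / (2 * r) := by
    rw [Real.sqrt_div pi_pos.le, hxr, show 2 * (2 * r ^ 2) = (2 * r) ^ 2 by ring,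
      Real.sqrt_sq (by positivity)]
  rw [h4]
  have h5 : √π ^ 2 = π := Real.sq_sqrt pi_pos.le
  have h6 : 0 < √π := by positivity
  field_simp
  rw [h5]
  ring
end
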